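/- The polynomial x₁x₂ + x₂x₃ + x₁x₃ ∈ F[x₁, x₂, x₃] is computable by an interval formula, but it is not computable by any read-once formula. In particular, the class of polynomials computable by interval formulas is different from the class of polynomials computable by read-once formulas. -/

import Mathlib

/-- An arithmetic formula over `F` in variables `x_0, …, x_{n-1}`: a rooted binary tree
whose leaves are labeled by variables or constants and whose internal nodes are `+` or `×`. -/
inductive Formula (F : Type) (n : ℕ) where
  | const : F → Formula F n
  | var : Fin n → Formula F n
  | add : Formula F n → Formula F n → Formula F n
  | mul : Formula F n → Formula F n → Formula F n

namespace Formula

variable {F : Type} {n : ℕ}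

/-- The polynomial computed by a formula. -/
noncomputable def eval [Field F] : Formula F n → MvPolynomial (Fin n) F
  | const c => MvPolynomial.C c
  | var i => MvPolynomial.X i
  | add f g => f.eval + g.eval
  | mul f g => f.eval * g.eval

/-- Number of leaves of the formula labeled by the variable `x_i`. -/
def readCount : Formula F n → Fin n → ℕ
  | const _, _ => 0
  | var j, i => if j = i then 1 else 0
  | add f g, i => f.readCount i + g.readCount i
  | mul f g, i => f.readCount i + g.readCount i

/-- The size of a formula is its number of nodes. -/
def size : Formula F n → ℕ
  | const _ => 1
  | var _ => 1
  | add f g => f.size + g.size + 1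
  | mul f g => f.size + g.size + 1

/-- The depth of a formula is the length of its longest root-to-leaf path. -/
def depth : Formula F n → ℕ
  | const _ => 0
  | var _ => 0
  | add f g => max f.depth g.depth + 1
  | mul f g => max f.depth g.depth + 1

end Formula

/-- An interval formula: every gate computes a polynomial whose variables are contained in
an interval of consecutive variables, and for every product gate the intervals associated
with its two children are disjoint.  (Intervals are intervals `[a,b]` of indices; for a
child whose polynomial has no variables the associated interval may be empty.) -/
def IsIntervalFormula {F : Type} {n : ℕ} [Field F] : Formula F n → Prop
  | .const _ => True
  | .var _ => True
  | .add f g => IsIntervalFormula f ∧ IsIntervalFormula g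
  | .mul f g => IsIntervalFormula f ∧ IsIntervalFormula g ∧
      ∃ a b c d : ℕ, Disjoint (Finset.Icc a b) (Finset.Icc c d) ∧
        (Formula.eval f).vars.image Fin.val ⊆ Finset.Icc a b ∧
        (Formula.eval g).vars.image Fin.val ⊆ Finset.Icc c d

namespace ROFAux
open MvPolynomial

variable {F : Type} [Field F]

lemma pd_comm (i j : Fin 3) (p : MvPolynomial (Fin 3) F) :
    pderiv i (pderiv j p) = pderiv j (pderiv i p) := by
  induction p using MvPolynomial.induction_on with
  | C a => simp
  | add p q hp hq => simp [hp, hq]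
  | mul_X p n hp =>
    have h1 : pderiv i (pderiv j (X n : MvPolynomial (Fin 3) F)) = 0 := by
      by_cases h : n = j
      · subst h; simp
      · simp [pderiv_X_of_ne h]
    have h2 : pderiv j (pderiv i (X n : MvPolynomial (Fin 3) F)) = 0 := by
      by_cases h : n = i
      · subst h; simp
      · simp [pderiv_X_of_ne h]
    simp only [Derivation.leibniz, map_add, smul_eq_mul, hp, h1, h2]
    ring

/-- The Wronskian-like expression. -/
noncomputable def W (i j k : Fin 3) (p : MvPolynomial (Fin 3) F) : MvPolynomial (Fin 3) F :=
  pderiv i p * pderiv k (pderiv j p) - pderiv j p * pderiv k (pderiv i p)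

lemma pd_zero {i k : Fin 3} {p : MvPolynomial (Fin 3) F} (h : pderiv k p = 0) :
    pderiv k (pderiv i p) = 0 := by
  rw [pd_comm, h, map_zero]

lemma W_split {i j k : Fin 3} {f g : MvPolynomial (Fin 3) F} (hk : pderiv k f = 0)
    (hi : pderiv i g = 0) (hj : pderiv j g = 0) : W i j k (f + g) = 0 ∧ W i j k (f * g) = 0 := by
  constructor
  · simp [W, hi, hj, pd_zero hk]
  · simp only [W, Derivation.leibniz, smul_eq_mul, hi, hj, map_add, pd_zero hk, map_zero]
    ring

lemma W_const {i j k : Fin 3} {f g : MvPolynomial (Fin 3) F} (h : W i j k f = 0)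
    (hi : pderiv i g = 0) (hj : pderiv j g = 0) (hk : pderiv k g = 0) :
    W i j k (f + g) = 0 ∧ W i j k (f * g) = 0 := by
  constructor
  · simpa [W, hi, hj] using h
  · have : W i j k (f * g) = g ^ 2 * W i j k f := by
      simp only [W, Derivation.leibniz, smul_eq_mul, hi, hj, hk, map_add, map_zero, mul_zero,
        zero_add]
      ring
    rw [this, h, mul_zero]

lemma pd_of_readCount (Φ : Formula F 3) (i : Fin 3) (h : Φ.readCount i = 0) :
    pderiv i Φ.eval = 0 := by
  induction Φ with
  | const c => simp [Formula.eval]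
  | var j =>
    have : j ≠ i := by
      intro e; simp [Formula.readCount, e] at h
    simp [Formula.eval, pderiv_X_of_ne this]
  | add f g hf hg =>
    simp only [Formula.readCount, Nat.add_eq_zero_iff] at h
    simp [Formula.eval, hf h.1, hg h.2]
  | mul f g hf hg =>
    simp only [Formula.readCount, Nat.add_eq_zero_iff] at h
    simp [Formula.eval, hf h.1, hg h.2]

/-- Some Wronskian vanishes. -/
def P (p : MvPolynomial (Fin 3) F) : Prop := W 0 1 2 p = 0 ∨ W 0 2 1 p = 0 ∨ W 1 2 0 p = 0

lemma P_const {f g : MvPolynomial (Fin 3) F} (h : P f) (h0 : pderiv 0 g = 0)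
    (h1 : pderiv 1 g = 0) (h2 : pderiv 2 g = 0) : P (f + g) ∧ P (f * g) := by
  rcases h with h | h | h
  · have := W_const h h0 h1 h2
    exact ⟨Or.inl this.1, Or.inl this.2⟩
  · have := W_const h h0 h2 h1
    exact ⟨Or.inr (Or.inl this.1), Or.inr (Or.inl this.2)⟩
  · have := W_const h h1 h2 h0
    exact ⟨Or.inr (Or.inr this.1), Or.inr (Or.inr this.2)⟩

lemma P_step {f g : MvPolynomial (Fin 3) F} (hf : P f) (hg : P g)
    (h : ∀ i, pderiv i f = 0 ∨ pderiv i g = 0) : P (f + g) ∧ P (f * g) := by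
  rcases h 0 with h0 | h0 <;> rcases h 1 with h1 | h1 <;> rcases h 2 with h2 | h2
  · rw [add_comm, mul_comm]; exact P_const hg h0 h1 h2
  · rw [add_comm, mul_comm]
    exact ⟨Or.inl (W_split h2 h0 h1).1, Or.inl (W_split h2 h0 h1).2⟩
  · rw [add_comm, mul_comm]
    exact ⟨Or.inr (Or.inl (W_split h1 h0 h2).1), Or.inr (Or.inl (W_split h1 h0 h2).2)⟩
  · exact ⟨Or.inr (Or.inr (W_split h0 h1 h2).1), Or.inr (Or.inr (W_split h0 h1 h2).2)⟩
  · rw [add_comm, mul_comm]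
    exact ⟨Or.inr (Or.inr (W_split h0 h1 h2).1), Or.inr (Or.inr (W_split h0 h1 h2).2)⟩
  · exact ⟨Or.inr (Or.inl (W_split h1 h0 h2).1), Or.inr (Or.inl (W_split h1 h0 h2).2)⟩
  · exact ⟨Or.inl (W_split h2 h0 h1).1, Or.inl (W_split h2 h0 h1).2⟩
  · exact P_const hf h0 h1 h2

lemma pd_or {f g : Formula F 3} (h : ∀ i, f.readCount i + g.readCount i ≤ 1) (i : Fin 3) :
    pderiv i f.eval = 0 ∨ pderiv i g.eval = 0 := by
  have := h i
  by_cases hf : f.readCount i = 0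
  · exact Or.inl (pd_of_readCount f i hf)
  · exact Or.inr (pd_of_readCount g i (by omega))

lemma P_of_rof (Φ : Formula F 3) (h : ∀ i, Φ.readCount i ≤ 1) : P Φ.eval := by
  induction Φ with
  | const c => left; simp [W, Formula.eval]
  | var j =>
    left
    fin_cases j <;> simp [W, Formula.eval, pderiv_X, Pi.single_apply]
  | add f g hf hg =>
    simp only [Formula.readCount] at h
    exact (P_step (hf fun i => by have := h i; omega) (hg fun i => by have := h i; omega)
      (pd_or h)).1
  | mul f g hf hg =>
    simp only [Formula.readCount] at h
    exact (P_step (hf fun i => by have := h i; omega) (hg fun i => by have := h i; omega)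
      (pd_or h)).2

lemma X_sub_ne {i j : Fin 3} (h : i ≠ j) : (X i - X j : MvPolynomial (Fin 3) F) ≠ 0 := by
  intro e
  exact h (X_injective (sub_eq_zero.mp e))

lemma not_P : ¬ P (X 0 * X 1 + X 1 * X 2 + X 0 * X 2 : MvPolynomial (Fin 3) F) := by
  rintro (h | h | h)
  · apply X_sub_ne (F := F) (show (1 : Fin 3) ≠ 0 by decide)
    rw [← h]
    simp [W, pderiv_X, Pi.single_apply]
  · apply X_sub_ne (F := F) (show (2 : Fin 3) ≠ 0 by decide)
    rw [← h]
    simp [W, pderiv_X, Pi.single_apply]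
  · apply X_sub_ne (F := F) (show (2 : Fin 3) ≠ 1 by decide)
    rw [← h]
    simp [W, pderiv_X, Pi.single_apply]
    ring

end ROFAux

open MvPolynomial in
/-- the polynomial `x₁x₂ + x₂x₃ + x₁x₃` (here `x₀x₁ + x₁x₂ + x₀x₂` with
`0`-indexed variables) is computable by an interval formula, but not by any read-once
formula; in particular interval formulas and ROFs compute different classes of
polynomials. -/
theorem interval_formula_ne_ROF (F : Type) [Field F] :
    (∃ Φ : Formula F 3, IsIntervalFormula Φ ∧
        Φ.eval = X 0 * X 1 + X 1 * X 2 + X 0 * X 2) ∧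
    ¬ (∃ Φ : Formula F 3, (∀ i, Φ.readCount i ≤ 1) ∧
        Φ.eval = X 0 * X 1 + X 1 * X 2 + X 0 * X 2) := by
  constructor
  · refine ⟨.add (.mul (.var 0) (.var 1)) (.mul (.add (.var 0) (.var 1)) (.var 2)), ?_, ?_⟩
    · refine ⟨⟨trivial, trivial, 0, 0, 1, 1, by decide, ?_, ?_⟩,
        ⟨trivial, trivial⟩, trivial, 0, 1, 2, 2, by decide, ?_, ?_⟩
      · simp [Formula.eval, vars_X]
      · simp [Formula.eval, vars_X]
      · intro x hx
        obtain ⟨y, hy, rfl⟩ := Finset.mem_image.mp hx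
        have := vars_add_subset _ _ hy
        simp only [Formula.eval, vars_X, Finset.mem_union, Finset.mem_singleton] at this
        rcases this with rfl | rfl <;> simp
      · simp [Formula.eval, vars_X]
    · simp only [Formula.eval]
      ring
  · rintro ⟨Φ, h, e⟩
    exact ROFAux.not_P (e ▸ ROFAux.P_of_rof Φ h)
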